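/- Let A_1, ..., A_K be real matrices with A_i ∈ ℝ^{m×n_i}, define M_0 := 0 and M_i := [A_1, ..., A_i], and for each i let Q_{i−1} be any matrix with orthonormal columns spanning range(M_{i−1}) and set R_i := (I − Q_{i−1}Q_{i−1}ᵀ)A_i. Let μ_1 ≥ μ_2 ≥ ... ≥ 0 be the singular values of R̂ := [R_1, ..., R_K]. Then for every target rank r ≥ 0, the optimal rank-r Frobenius approximation error of M_K satisfies E_r^2(M_K) ≤ Σ_{i=1}^K ‖A_i‖_F^2 − Σ_{j=1}^r μ_j^2. -/

import Mathlib

/-!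
Let `P i` be the orthogonal projection onto the range of the first `i` blocks and
`D i = P (i + 1) - P i`. Since the `i`-th block `A i` lies in the range of `P (i + 1)`, its residual
is `R i = D i * A i`: in an orthonormal basis adapted to the chain of ranges, the concatenated
matrix `M` is block upper triangular and the residual matrix is its block diagonal. The theorem
says that passing to the block diagonal (pinching) does not increase the Ky Fan sums of squared
singular values.

Let `u j`, `j ∈ J`, be left singular vectors of the residual matrix for its `r` largest singular
values. The energy they capture is `∑ j, ∑ i, ‖(R i)ᵀ u j‖²`, and
`‖(R i)ᵀ u j‖ = ‖(A i)ᵀ (D i u j)‖ ≤ ‖Mᵀ (D i u j)‖`. The vectors `D i u j` are not orthonormal, but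
they satisfy Bessel's inequality and have total squared length at most `r`, because
`∑ i, ‖D i v‖² ≤ ‖v‖²` by telescoping (`sum_chain_sub_le`). By a fractional version of Ky Fan's
maximum principle (`errSq_le_of_bessel`), such a family captures no more energy of `M` than its `r`
leading left singular vectors, which gives the bound. The fractional version rests on the
elementary fact that weights in `[0, 1]` of total mass at most `r` are dominated by the indicator of
`r` indices with largest values (`exists_finset_weighted_sum_le`).
-/

open Matrix

/-- Over `ℝ`, the conjugate transpose is the transpose. -/
lemma real_conjTranspose_eq_transpose {ι κ : Type*} (X : Matrix ι κ ℝ) : Xᴴ = Xᵀ :=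
  Matrix.ext fun _ _ => star_trivial _

/-- The Gram matrix `X Xᵀ` of a real matrix is Hermitian (symmetric). -/
lemma gram_isHermitian {m : ℕ} {ι : Type*} [Fintype ι] (X : Matrix (Fin m) ι ℝ) :
    (X * Xᵀ).IsHermitian := by
  rw [← real_conjTranspose_eq_transpose]
  exact isHermitian_mul_conjTranspose_self X

/-- `sValSq X j` is `σ_{j+1}(X)²`, the `(j+1)`-st largest squared singular value of `X`
(0-indexed `j`), i.e. the `(j+1)`-st largest eigenvalue of `X Xᵀ`, extended by zeros. -/
noncomputable def sValSq {m : ℕ} {ι : Type*} [Fintype ι] (X : Matrix (Fin m) ι ℝ) (j : ℕ) : ℝ :=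
  ((List.ofFn (gram_isHermitian X).eigenvalues).mergeSort (fun a b => decide (b ≤ a))).getD j 0

/-- `sVal X j` is the `(j+1)`-st largest singular value `σ_{j+1}(X)` (0-indexed `j`),
extended by zeros. -/
noncomputable def sVal {m : ℕ} {ι : Type*} [Fintype ι] (X : Matrix (Fin m) ι ℝ) (j : ℕ) : ℝ :=
  Real.sqrt (sValSq X j)

/-- Squared Frobenius norm. -/
noncomputable def frobSq {ι κ : Type*} [Fintype ι] [Fintype κ] (X : Matrix ι κ ℝ) : ℝ :=
  ∑ i, ∑ j, X i j ^ 2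

/-- `errSq X r = E_r²(X) = min_{rank Y ≤ r} ‖X - Y‖_F²`,
the optimal rank-`r` Frobenius approximation error (squared). -/
noncomputable def errSq {m : ℕ} {ι : Type*} [Fintype ι] (X : Matrix (Fin m) ι ℝ) (r : ℕ) : ℝ :=
  sInf {e : ℝ | ∃ Y : Matrix (Fin m) ι ℝ, Y.rank ≤ r ∧ e = frobSq (X - Y)}

/-- Horizontal concatenation `[A 0, …, A (K-1)]` of blocks indexed by `Fin K`. -/
def hcatF (m K : ℕ) (n : Fin K → ℕ) (A : ∀ j, Matrix (Fin m) (Fin (n j)) ℝ) :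
    Matrix (Fin m) ((j : Fin K) × Fin (n j)) ℝ := fun i c => A c.1 i c.2

/-- Horizontal concatenation `[A 0, …, A (K-1)]` of the first `K` blocks of an
`ℕ`-indexed family; `hcatN m t n A` is the prefix concatenation `M_t`. -/
def hcatN (m K : ℕ) (n : ℕ → ℕ) (A : ∀ j : ℕ, Matrix (Fin m) (Fin (n j)) ℝ) :
    Matrix (Fin m) ((j : Fin K) × Fin (n j)) ℝ := fun i c => A c.1 i c.2

/-! ### Finite sums -/

/-- The first `r` entries of a rearrangement of `f 0, …, f (m-1)`, padded by zeros, sum to the same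
value as `f` over some index set of at most `r` elements. -/
lemma exists_finset_sum_eq_sum_getD {m : ℕ} (f : Fin m → ℝ) (L : List ℝ)
    (hL : L.Perm (List.ofFn f)) (r : ℕ) :
    ∃ J : Finset (Fin m), J.card ≤ r ∧ ∑ j ∈ Finset.range r, L.getD j 0 = ∑ j ∈ J, f j := by
  have hsum : ∀ s : ℕ, ∑ j ∈ Finset.range s, L.getD j 0 = (L.take s).sum := by
    intro s
    induction s with
    | zero => simp
    | succ s ih =>
      rw [Finset.sum_range_succ, ih]
      by_cases h : s < L.length
      · rw [List.sum_take_succ _ _ h, List.getD_eq_getElem _ _ h]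
      · rw [List.getD_eq_default _ _ (by omega), List.take_of_length_le (by omega),
          List.take_of_length_le (by omega), add_zero]
  have h1 : (L.take r).Subperm ((List.finRange m).map f) := by
    rw [← List.ofFn_eq_map]
    exact (List.take_sublist r L).subperm.trans hL.subperm
  obtain ⟨l, hl, hsub⟩ := h1
  obtain ⟨l', hl', rfl⟩ := List.sublist_map_iff.mp hsub
  have hnd : l'.Nodup := hl'.nodup (List.nodup_finRange m)
  refine ⟨l'.toFinset, ?_, ?_⟩
  · rw [List.toFinset_card_of_nodup hnd, ← List.length_map (f := f), hl.length_eq]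
    exact List.length_take_le _ _
  · rw [hsum, List.sum_toFinset _ hnd, hl.sum_eq]

/-- For nonnegative values, weights in `[0, 1]` of total mass at most `r` do no better than the
indicator of a suitable set of at most `r` indices. -/
lemma exists_finset_weighted_sum_le {ι : Type*} [Fintype ι] (f w : ι → ℝ) (r : ℕ)
    (hf : ∀ i, 0 ≤ f i) (hw0 : ∀ i, 0 ≤ w i) (hw1 : ∀ i, w i ≤ 1) (hw : ∑ i, w i ≤ r) :
    ∃ S : Finset ι, S.card ≤ r ∧ ∑ i, f i * w i ≤ ∑ i ∈ S, f i := by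
  classical
  by_cases hr : Fintype.card ι ≤ r
  · exact ⟨Finset.univ, by simpa using hr,
      Finset.sum_le_sum fun i _ => mul_le_of_le_one_right (hf i) (hw1 i)⟩
  push Not at hr
  obtain ⟨S, hS, hmax⟩ := Finset.exists_max_image (Finset.powersetCard r (Finset.univ : Finset ι))
    (fun S => ∑ i ∈ S, f i) (by
      rw [Finset.powersetCard_nonempty]; simpa using hr.le)
  have hcard : S.card = r := (Finset.mem_powersetCard.mp hS).2
  refine ⟨S, hcard.le, ?_⟩
  -- Maximality of `S` under exchanging one element.
  have hex : ∀ a ∈ S, ∀ b ∉ S, f b ≤ f a := by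
    intro a ha b hb
    have hb' : b ∉ S.erase a := fun h => hb (Finset.mem_of_mem_erase h)
    have h := hmax (insert b (S.erase a)) (by
      rw [Finset.mem_powersetCard]
      refine ⟨Finset.subset_univ _, ?_⟩
      rw [Finset.card_insert_of_notMem hb', Finset.card_erase_add_one ha, hcard])
    rw [Finset.sum_insert hb', ← Finset.add_sum_erase S f ha] at h
    linarith
  obtain ⟨c, hc0, hc1, hc2⟩ :
      ∃ c : ℝ, 0 ≤ c ∧ (∀ a ∈ S, c ≤ f a) ∧ (∀ b ∉ S, f b * w b ≤ c * w b) := by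
    rcases S.eq_empty_or_nonempty with rfl | hne
    · refine ⟨0, le_rfl, by simp, fun b _ => ?_⟩
      have h0 : r = 0 := by simpa using hcard.symm
      have : w b ≤ ∑ i, w i := Finset.single_le_sum (fun i _ => hw0 i) (Finset.mem_univ b)
      have hb : w b = 0 := le_antisymm (by rw [h0] at hw; push_cast at hw; linarith) (hw0 b)
      simp [hb]
    · obtain ⟨a, ha, hamin⟩ := Finset.exists_min_image S f hne
      exact ⟨f a, hf a, hamin, fun b hb => mul_le_mul_of_nonneg_right (hex a ha b hb) (hw0 b)⟩
  -- The constant `c` lies below the values on `S` and above those of positive weight off `S`.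
  have hterm : ∀ i, f i * w i ≤ (if i ∈ S then f i - c else 0) + c * w i := by
    intro i
    split_ifs with hi
    · nlinarith [hc1 i hi, hw1 i]
    · simpa using hc2 i hi
  have hsum : ∑ i, f i * w i ≤ ∑ i ∈ S, f i - r * c + c * ∑ i, w i := by
    refine (Finset.sum_le_sum fun i _ => hterm i).trans (le_of_eq ?_)
    rw [Finset.sum_add_distrib, ← Finset.mul_sum, Finset.sum_ite_mem, Finset.univ_inter,
      Finset.sum_sub_distrib, Finset.sum_const, hcard, nsmul_eq_mul]
  have hc : c * ∑ i, w i ≤ c * r := mul_le_mul_of_nonneg_left hw hc0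
  linarith

/-! ### Diagonalization of the Gram matrix and low-rank approximation -/

/-- A real orthogonal diagonalization of the Gram matrix `X Xᵀ`. -/
lemma exists_gram_diagonalization {m : ℕ} {ι : Type*} [Fintype ι] (X : Matrix (Fin m) ι ℝ) :
    ∃ V : Matrix (Fin m) (Fin m) ℝ, Vᵀ * V = 1 ∧ V * Vᵀ = 1 ∧
      X * Xᵀ = V * diagonal (gram_isHermitian X).eigenvalues * Vᵀ := by
  set hX := gram_isHermitian X
  have hst : star (hX.eigenvectorUnitary : Matrix (Fin m) (Fin m) ℝ) =
      (hX.eigenvectorUnitary : Matrix (Fin m) (Fin m) ℝ)ᵀ :=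
    real_conjTranspose_eq_transpose _
  refine ⟨hX.eigenvectorUnitary, ?_, ?_, ?_⟩
  · rw [← hst]; exact Unitary.coe_star_mul_self _
  · rw [← hst]; exact Unitary.coe_mul_star_self _
  · have h := hX.spectral_theorem
    rw [Unitary.conjStarAlgAut_apply, hst] at h
    exact h

lemma dotProduct_self_transpose_mulVec {m : ℕ} {ι : Type*} [Fintype ι] (X : Matrix (Fin m) ι ℝ)
    (x : Fin m → ℝ) : (Xᵀ *ᵥ x) ⬝ᵥ (Xᵀ *ᵥ x) = x ⬝ᵥ (X * Xᵀ) *ᵥ x := by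
  rw [← mulVec_mulVec, dotProduct_mulVec x X, mulVec_transpose]

lemma dotProduct_self_eq_sum_eigenvalues {m : ℕ} {ι : Type*} [Fintype ι]
    {X : Matrix (Fin m) ι ℝ} {V : Matrix (Fin m) (Fin m) ℝ} {d : Fin m → ℝ}
    (hX : X * Xᵀ = V * diagonal d * Vᵀ) (x : Fin m → ℝ) :
    (Xᵀ *ᵥ x) ⬝ᵥ (Xᵀ *ᵥ x) = ∑ l, d l * (Vᵀ *ᵥ x) l ^ 2 := by
  rw [dotProduct_self_transpose_mulVec, hX, ← mulVec_mulVec, ← mulVec_mulVec, dotProduct_mulVec,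
    ← mulVec_transpose]
  simp only [dotProduct, mulVec_diagonal]
  exact Finset.sum_congr rfl fun l _ => by ring

lemma sum_sq_transpose_mulVec {m : ℕ} {V : Matrix (Fin m) (Fin m) ℝ} (hV : V * Vᵀ = 1)
    (x : Fin m → ℝ) : ∑ l, (Vᵀ *ᵥ x) l ^ 2 = x ⬝ᵥ x := by
  have h := dotProduct_self_transpose_mulVec V x
  rw [hV, one_mulVec] at h
  rw [← h]
  exact Finset.sum_congr rfl fun l _ => by ring

lemma frobSq_eq_trace {m : ℕ} {ι : Type*} [Fintype ι] (X : Matrix (Fin m) ι ℝ) :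
    frobSq X = (X * Xᵀ).trace := by
  simp only [frobSq, trace, diag, mul_apply, transpose_apply]
  exact Finset.sum_congr rfl fun i _ => Finset.sum_congr rfl fun j _ => by ring

/-- The orthogonal projection onto the eigenvectors indexed by `S` witnesses an approximation of
rank at most `#S` whose error is the energy of `X` minus the eigenvalues on `S`. -/
lemma errSq_le_frobSq_sub_sum_eigenvalues {m : ℕ} {ι : Type*} [Fintype ι]
    (X : Matrix (Fin m) ι ℝ) {V : Matrix (Fin m) (Fin m) ℝ} {d : Fin m → ℝ}
    (hV : Vᵀ * V = 1) (hX : X * Xᵀ = V * diagonal d * Vᵀ) {r : ℕ} (S : Finset (Fin m))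
    (hS : S.card ≤ r) : errSq X r ≤ frobSq X - ∑ l ∈ S, d l := by
  classical
  set e : Fin m → ℝ := fun l => if l ∈ S then 1 else 0 with he
  set P : Matrix (Fin m) (Fin m) ℝ := V * diagonal e * Vᵀ with hP
  have hbdd : BddBelow {a : ℝ | ∃ Y : Matrix (Fin m) ι ℝ, Y.rank ≤ r ∧ a = frobSq (X - Y)} := by
    refine ⟨0, ?_⟩
    rintro _ ⟨Y, -, rfl⟩
    exact Finset.sum_nonneg fun i _ => Finset.sum_nonneg fun j _ => sq_nonneg _
  refine csInf_le hbdd ⟨P * X, ?_, ?_⟩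
  · calc (P * X).rank ≤ P.rank := rank_mul_le_left _ _
      _ ≤ (V * diagonal e).rank := rank_mul_le_left _ _
      _ ≤ (diagonal e).rank := rank_mul_le_right _ _
      _ = S.card := by
        rw [rank_diagonal]
        simp [he]
      _ ≤ r := hS
  · have hPt : Pᵀ = P := by
      simp [hP, Matrix.mul_assoc]
    have hPG : P * (X * Xᵀ) = V * diagonal (e * d) * Vᵀ := by
      calc P * (X * Xᵀ) = V * diagonal e * (Vᵀ * V) * diagonal d * Vᵀ := by
            rw [hX, hP]; simp only [Matrix.mul_assoc]
        _ = V * diagonal (e * d) * Vᵀ := by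
            rw [hV, Matrix.mul_one, Matrix.mul_assoc V, diagonal_mul_diagonal]; rfl
    have hPP : P * P = P := by
      calc P * P = V * diagonal e * (Vᵀ * V) * diagonal e * Vᵀ := by
            rw [hP]; simp only [Matrix.mul_assoc]
        _ = P := by
            rw [hV, Matrix.mul_one, Matrix.mul_assoc V, diagonal_mul_diagonal, hP]
            congr 3
            ext l
            simp [he]
    have htr : (P * (X * Xᵀ)).trace = ∑ l ∈ S, d l := by
      rw [hPG, Matrix.mul_assoc, trace_mul_comm, Matrix.mul_assoc, hV, Matrix.mul_one,
        trace_diagonal]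
      simp [he]
    rw [frobSq_eq_trace, frobSq_eq_trace]
    have h1 : (X - P * X) * (X - P * X)ᵀ
        = X * Xᵀ - P * (X * Xᵀ) - (X * Xᵀ) * P + P * (X * Xᵀ) * P := by
      rw [transpose_sub, transpose_mul, hPt]
      simp only [Matrix.sub_mul, Matrix.mul_sub, Matrix.mul_assoc]
      abel
    have h2 : (X * Xᵀ * P).trace = (P * (X * Xᵀ)).trace := trace_mul_comm _ _
    have h3 : (P * (X * Xᵀ) * P).trace = (P * (X * Xᵀ)).trace := by
      rw [trace_mul_comm, ← Matrix.mul_assoc, hPP]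
    rw [h1, trace_add, trace_sub, trace_sub, h2, h3, htr]
    ring

lemma gram_eigenvalues_nonneg {m : ℕ} {ι : Type*} [Fintype ι] (X : Matrix (Fin m) ι ℝ)
    (l : Fin m) : 0 ≤ (gram_isHermitian X).eigenvalues l := by
  have h : (X * Xᵀ).PosSemidef := by
    rw [← real_conjTranspose_eq_transpose]
    exact posSemidef_self_mul_conjTranspose X
  exact h.eigenvalues_nonneg l

/-- Fractional Ky Fan bound: if the vectors `x k` satisfy Bessel's inequality (that is,
`∑ x k (x k)ᵀ ≤ 1`) and have total squared length at most `r`, then the energy of `X` they capture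
is also captured by a rank-`r` approximation. -/
lemma errSq_le_of_bessel {m : ℕ} {ι κ : Type*} [Fintype ι] [Fintype κ]
    (X : Matrix (Fin m) ι ℝ) (r : ℕ) (x : κ → Fin m → ℝ)
    (hbessel : ∀ v, ∑ k, (x k ⬝ᵥ v) ^ 2 ≤ v ⬝ᵥ v) (htr : ∑ k, x k ⬝ᵥ x k ≤ r) :
    errSq X r ≤ frobSq X - ∑ k, (Xᵀ *ᵥ x k) ⬝ᵥ (Xᵀ *ᵥ x k) := by
  obtain ⟨V, hV, hV', hX⟩ := exists_gram_diagonalization X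
  set d := (gram_isHermitian X).eigenvalues
  have hdiag : ∀ l, V.col l ⬝ᵥ V.col l = 1 := fun l => by
    have := congrFun (congrFun hV l) l
    simpa [mul_apply, dotProduct] using this
  obtain ⟨S, hS, hle⟩ := exists_finset_weighted_sum_le d (fun l => ∑ k, (Vᵀ *ᵥ x k) l ^ 2) r
    (gram_eigenvalues_nonneg X) (fun l => Finset.sum_nonneg fun k _ => sq_nonneg _)
    (fun l => by
      refine le_trans (le_of_eq ?_) ((hbessel (V.col l)).trans (hdiag l).le)
      exact Finset.sum_congr rfl fun k _ => by rw [dotProduct_comm]; rfl)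
    (by
      rw [Finset.sum_comm]
      refine le_trans (le_of_eq ?_) htr
      exact Finset.sum_congr rfl fun k _ => sum_sq_transpose_mulVec hV' _)
  refine (errSq_le_frobSq_sub_sum_eigenvalues X hV hX S hS).trans ?_
  have : ∑ k, (Xᵀ *ᵥ x k) ⬝ᵥ (Xᵀ *ᵥ x k) = ∑ l, d l * ∑ k, (Vᵀ *ᵥ x k) l ^ 2 := by
    simp only [dotProduct_self_eq_sum_eigenvalues hX, Finset.mul_sum]
    exact Finset.sum_comm
  linarith

/-- The sum of the `r` largest squared singular values is attained as the energy captured by at most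
`r` columns of an orthogonal matrix, namely left singular vectors. -/
lemma exists_sum_sVal_sq_eq {m : ℕ} {ι : Type*} [Fintype ι] (X : Matrix (Fin m) ι ℝ) (r : ℕ) :
    ∃ V : Matrix (Fin m) (Fin m) ℝ, Vᵀ * V = 1 ∧ V * Vᵀ = 1 ∧ ∃ J : Finset (Fin m), J.card ≤ r ∧
      ∑ j ∈ Finset.range r, sVal X j ^ 2 =
        ∑ j ∈ J, (Xᵀ *ᵥ V.col j) ⬝ᵥ (Xᵀ *ᵥ V.col j) := by
  obtain ⟨V, hV, hV', hX⟩ := exists_gram_diagonalization X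
  have hperm := List.mergeSort_perm (List.ofFn (gram_isHermitian X).eigenvalues)
    (fun a b => decide (b ≤ a))
  obtain ⟨J, hJ, hsum⟩ := exists_finset_sum_eq_sum_getD _ _ hperm r
  refine ⟨V, hV, hV', J, hJ, ?_⟩
  have hnn : ∀ j, 0 ≤ sValSq X j := by
    intro j
    unfold sValSq
    set L := (List.ofFn (gram_isHermitian X).eigenvalues).mergeSort (fun a b => decide (b ≤ a))
    by_cases h : j < L.length
    · rw [List.getD_eq_getElem _ _ h]
      obtain ⟨l, hl⟩ := (List.mem_ofFn' _ _).mp (hperm.mem_iff.mp (List.getElem_mem h))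
      exact hl ▸ gram_eigenvalues_nonneg X l
    · rw [List.getD_eq_default _ _ (by omega)]
  calc ∑ j ∈ Finset.range r, sVal X j ^ 2 = ∑ j ∈ Finset.range r, sValSq X j :=
        Finset.sum_congr rfl fun j _ => Real.sq_sqrt (hnn j)
    _ = ∑ j ∈ J, (gram_isHermitian X).eigenvalues j := hsum
    _ = _ := Finset.sum_congr rfl fun j _ => by
        have hcol : Vᵀ *ᵥ V.col j = Pi.single j 1 := by
          ext l
          have := congrFun (congrFun hV l) j
          simpa [mul_apply, mulVec, dotProduct, one_apply, Pi.single_apply] using this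
        rw [dotProduct_self_eq_sum_eigenvalues hX, hcol]
        simp [Pi.single_apply]

/-! ### Block concatenations and chains of projections -/

/-- If `Q` has orthonormal columns, `Q Qᵀ` is the identity on the range of `Q`, hence fixes every
matrix whose columns lie there. -/
lemma mul_transpose_mul_eq_of_range_le {m a b : Type*} [Fintype m] [Fintype a] [Fintype b]
    [DecidableEq a] [DecidableEq b] {Q : Matrix m a ℝ} {B : Matrix m b ℝ} (hQ : Qᵀ * Q = 1)
    (h : LinearMap.range B.mulVecLin ≤ LinearMap.range Q.mulVecLin) : Q * Qᵀ * B = B := by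
  refine ext_of_mulVec_single fun j => ?_
  obtain ⟨y, hy⟩ := h ⟨Pi.single j 1, rfl⟩
  rw [mulVecLin_apply, mulVecLin_apply] at hy
  rw [← mulVec_mulVec, ← hy, mulVec_mulVec, Matrix.mul_assoc, hQ, Matrix.mul_one]

lemma range_hcatN_mono (m : ℕ) (n : ℕ → ℕ) (A : ∀ j : ℕ, Matrix (Fin m) (Fin (n j)) ℝ)
    {s t : ℕ} (hst : s ≤ t) :
    LinearMap.range (hcatN m s n A).mulVecLin ≤ LinearMap.range (hcatN m t n A).mulVecLin := by
  rw [range_mulVecLin, range_mulVecLin]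
  refine Submodule.span_mono ?_
  rintro _ ⟨⟨j, c⟩, rfl⟩
  exact ⟨⟨⟨j, j.2.trans_le hst⟩, c⟩, rfl⟩

lemma range_block_le_hcatN (m : ℕ) (n : ℕ → ℕ) (A : ∀ j : ℕ, Matrix (Fin m) (Fin (n j)) ℝ)
    (i : ℕ) :
    LinearMap.range (A i).mulVecLin ≤ LinearMap.range (hcatN m (i + 1) n A).mulVecLin := by
  rw [range_mulVecLin, range_mulVecLin]
  refine Submodule.span_mono ?_
  rintro _ ⟨c, rfl⟩
  exact ⟨⟨⟨i, i.lt_succ_self⟩, c⟩, rfl⟩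

lemma dotProduct_self_hcatN (m K : ℕ) (n : ℕ → ℕ) (A : ∀ j : ℕ, Matrix (Fin m) (Fin (n j)) ℝ)
    (x : Fin m → ℝ) : ((hcatN m K n A)ᵀ *ᵥ x) ⬝ᵥ ((hcatN m K n A)ᵀ *ᵥ x) =
      ∑ i : Fin K, ((A i)ᵀ *ᵥ x) ⬝ᵥ ((A i)ᵀ *ᵥ x) := by
  simp only [dotProduct]
  rw [Fintype.sum_sigma]
  rfl

lemma frobSq_hcatN (m K : ℕ) (n : ℕ → ℕ) (A : ∀ j : ℕ, Matrix (Fin m) (Fin (n j)) ℝ) :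
    frobSq (hcatN m K n A) = ∑ i ∈ Finset.range K, frobSq (A i) := by
  rw [Finset.sum_range]
  simp only [frobSq, Fintype.sum_sigma]
  exact Finset.sum_comm

/-- Bessel's inequality for the successive differences of an increasing chain of orthogonal
projections; the energies telescope. -/
lemma sum_chain_sub_le {m K : ℕ} (P : ℕ → Matrix (Fin m) (Fin m) ℝ) (hsymm : ∀ i, (P i)ᵀ = P i)
    (hidem : ∀ i ≤ K, P i * P i = P i) (hchain : ∀ i < K, P (i + 1) * P i = P i) (hK : P K = 1)
    (v : Fin m → ℝ) :
    ∑ i : Fin K, ((P (i + 1) - P i) *ᵥ v) ⬝ᵥ ((P (i + 1) - P i) *ᵥ v) ≤ v ⬝ᵥ v := by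
  have hquad : ∀ D : Matrix (Fin m) (Fin m) ℝ, Dᵀ = D → D * D = D →
      (D *ᵥ v) ⬝ᵥ (D *ᵥ v) = v ⬝ᵥ D *ᵥ v := by
    intro D h1 h2
    have := dotProduct_self_transpose_mulVec D v
    rwa [h1, h2] at this
  have hD : ∀ i < K, ((P (i + 1) - P i) *ᵥ v) ⬝ᵥ ((P (i + 1) - P i) *ᵥ v) =
      v ⬝ᵥ P (i + 1) *ᵥ v - v ⬝ᵥ P i *ᵥ v := by
    intro i hi
    have hc := hchain i hi
    have hc' : P i * P (i + 1) = P i := by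
      have := congrArg transpose hc
      rwa [transpose_mul, hsymm, hsymm] at this
    rw [hquad _ (by rw [transpose_sub, hsymm, hsymm]) (by
      rw [Matrix.sub_mul, Matrix.mul_sub, Matrix.mul_sub, hc, hc', hidem _ hi.le,
        hidem _ hi]
      abel), sub_mulVec, dotProduct_sub]
  have h0 : 0 ≤ v ⬝ᵥ P 0 *ᵥ v := by
    rw [← hquad _ (hsymm 0) (hidem 0 (Nat.zero_le _))]
    exact Finset.sum_nonneg fun i _ => mul_self_nonneg _
  rw [Finset.sum_congr rfl fun (i : Fin K) _ => hD i i.2,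
    ← Finset.sum_range (fun i => v ⬝ᵥ P (i + 1) *ᵥ v - v ⬝ᵥ P i *ᵥ v),
    Finset.sum_range_sub (fun i => v ⬝ᵥ P i *ᵥ v), hK, one_mulVec]
  linarith

/-! ### The residual bound -/

/-- global upper bound on the optimal SVD compression error via residuals.
With `M_i = [A 0, …, A (i-1)]` (`M_0 = 0`), `Q i` any matrix with orthonormal columns
spanning `range(M_i)`, residuals `R i = (I − Q i (Q i)ᵀ) (A i)`, and `μ_j` the singular
values of `R̂ = [R 0, …, R (K-1)]`, for every target rank `r ≥ 0`:
`E_r²(M_K) ≤ Σ_i ‖A_i‖_F² − Σ_{j=1}^r μ_j²`. -/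
theorem errSq_le_energy_sub_residual_sVals
    (m K : ℕ) (n : ℕ → ℕ)
    (A : ∀ j : ℕ, Matrix (Fin m) (Fin (n j)) ℝ)
    (q : ℕ → ℕ) (Q : ∀ i : ℕ, Matrix (Fin m) (Fin (q i)) ℝ)
    (hQorth : ∀ i < K, (Q i)ᵀ * Q i = 1)
    (hQrange : ∀ i < K,
      LinearMap.range (Q i).mulVecLin = LinearMap.range (hcatN m i n A).mulVecLin)
    (R : ∀ i : ℕ, Matrix (Fin m) (Fin (n i)) ℝ)
    (hR : ∀ i < K, R i = (1 - Q i * (Q i)ᵀ) * A i)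
    (r : ℕ) :
    errSq (hcatN m K n A) r ≤
      (∑ i ∈ Finset.range K, frobSq (A i)) -
        ∑ j ∈ Finset.range r, (sVal (hcatN m K n R) j) ^ 2 := by
  -- Ending the chain with the identity instead of the projection onto the range of the whole
  -- matrix is harmless, since the last block lies in that range.
  set P : ℕ → Matrix (Fin m) (Fin m) ℝ := fun i => if i < K then Q i * (Q i)ᵀ else 1 with hP
  have hPlt : ∀ i < K, P i = Q i * (Q i)ᵀ := fun i hi => if_pos hi
  have hPge : ∀ i, ¬ i < K → P i = 1 := fun i hi => if_neg hi
  have hsymm : ∀ i, (P i)ᵀ = P i := by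
    intro i
    by_cases hi : i < K
    · rw [hPlt i hi, transpose_mul, transpose_transpose]
    · rw [hPge i hi, transpose_one]
  have habsorb : ∀ i < K, ∀ {c : ℕ} (B : Matrix (Fin m) (Fin c) ℝ),
      LinearMap.range B.mulVecLin ≤ LinearMap.range (hcatN m (i + 1) n A).mulVecLin →
      P (i + 1) * B = B := by
    intro i _ c B hB
    by_cases hi' : i + 1 < K
    · rw [hPlt _ hi']
      exact mul_transpose_mul_eq_of_range_le (hQorth _ hi') (hB.trans (hQrange _ hi').ge)
    · rw [hPge _ hi', Matrix.one_mul]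
  have hidem : ∀ i ≤ K, P i * P i = P i := by
    intro i _
    by_cases hi : i < K
    · rw [hPlt i hi, ← Matrix.mul_assoc, mul_transpose_mul_eq_of_range_le (hQorth i hi) le_rfl]
    · rw [hPge i hi, Matrix.mul_one]
  have hchain : ∀ i < K, P (i + 1) * P i = P i := by
    intro i hi
    rw [hPlt i hi, ← Matrix.mul_assoc, habsorb i hi _
      ((hQrange i hi).le.trans (range_hcatN_mono m n A i.le_succ))]
  have hproj := sum_chain_sub_le P hsymm hidem hchain (hPge K (lt_irrefl K))
  set D : Fin K → Matrix (Fin m) (Fin m) ℝ := fun i => P (i + 1) - P i with hD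
  have hDsymm : ∀ i, (D i)ᵀ = D i := fun i => by rw [hD, transpose_sub, hsymm, hsymm]
  have hRD : ∀ i : Fin K, (R i)ᵀ = (A i)ᵀ * D i := by
    intro i
    have h1 : D i * A i = R i := by
      rw [hR i i.2, hD, Matrix.sub_mul, habsorb i i.2 _ (range_block_le_hcatN m n A i),
        hPlt i i.2, Matrix.sub_mul, Matrix.one_mul]
    rw [← h1, transpose_mul, hDsymm]
  obtain ⟨V, hV, hV', J, hJ, hsum⟩ := exists_sum_sVal_sq_eq (hcatN m K n R) r
  -- The frame: the left singular vectors of the residual matrix, split along the chain.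
  set x : J × Fin K → Fin m → ℝ := fun k => D k.2 *ᵥ V.col k.1 with hx
  have hbessel : ∀ v, ∑ k, (x k ⬝ᵥ v) ^ 2 ≤ v ⬝ᵥ v := by
    intro v
    refine le_trans ?_ (hproj v)
    rw [Fintype.sum_prod_type_right]
    refine Finset.sum_le_sum fun i _ => ?_
    have h1 : ∀ j : Fin m, (D i *ᵥ V.col j) ⬝ᵥ v = (Vᵀ *ᵥ (D i *ᵥ v)) j := by
      intro j
      rw [dotProduct_comm, dotProduct_mulVec, ← mulVec_transpose, hDsymm, dotProduct_comm]
      rfl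
    simp only [hx, h1]
    rw [Finset.sum_coe_sort J (fun j => (Vᵀ *ᵥ (D i *ᵥ v)) j ^ 2)]
    exact (Finset.sum_le_univ_sum_of_nonneg fun j => sq_nonneg _).trans
      (sum_sq_transpose_mulVec hV' _).le
  have htr : ∑ k, x k ⬝ᵥ x k ≤ r := by
    rw [Fintype.sum_prod_type]
    calc _ ≤ ∑ j : J, V.col (j : Fin m) ⬝ᵥ V.col (j : Fin m) :=
          Finset.sum_le_sum fun j _ => hproj (V.col j)
      _ = ∑ j : J, (1 : ℝ) := Finset.sum_congr rfl fun j _ => by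
          have := congrFun (congrFun hV j) j
          simpa [mul_apply, dotProduct] using this
      _ ≤ r := by simpa using hJ
  refine (errSq_le_of_bessel (hcatN m K n A) r x hbessel htr).trans ?_
  rw [frobSq_hcatN, hsum]
  refine sub_le_sub_left ?_ _
  rw [Fintype.sum_prod_type, ← Finset.sum_coe_sort J]
  refine Finset.sum_le_sum fun j _ => ?_
  rw [dotProduct_self_hcatN]
  refine Finset.sum_le_sum fun i _ => ?_
  rw [dotProduct_self_hcatN, hRD i, ← mulVec_mulVec]
  exact Finset.single_le_sum
    (f := fun l : Fin K => ((A l)ᵀ *ᵥ x (j, i)) ⬝ᵥ ((A l)ᵀ *ᵥ x (j, i)))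
    (fun l _ => Finset.sum_nonneg fun c _ => mul_self_nonneg _) (Finset.mem_univ i)
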